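/- arXiv:1910.09423 — 4 statements merged into one kernel-verified Lean document; each statement's English description precedes it below -/
import Mathlib

section
/- Let 𝒞 be a finitely complete category, let 𝔘 be an ultrafilter on 𝒞, let C be an object of 𝒞, and let S and T be sieves on C such that S ∪ T ∈ 𝔘(C). Then either S ∈ 𝔘(C) or T ∈ 𝔘(C). -/
open CategoryTheory Limits

universe w v u

/-- A filter on a category: assigns to each object a collection of sieves that is
upward closed, closed under finite intersections, and omits the empty sieve. -/
structure CatFilter (𝒞 : Type u) [Category.{v} 𝒞] where
  F : ∀ X : 𝒞, Set (Sieve X)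
  /-- (F1) upward closure -/
  mono : ∀ {X : 𝒞} {S R : Sieve X}, S ∈ F X → S ≤ R → R ∈ F X
  /-- (F2) every finite intersection of members is a member -/
  finInter : ∀ {X : 𝒞} (T : Finset (Sieve X)), (∀ S ∈ T, S ∈ F X) → T.inf id ∈ F X
  /-- (F3) the empty sieve is not a member -/
  bot_not_mem : ∀ X : 𝒞, ⊥ ∉ F X

/-- An ultrafilter: a filter with no strictly finer filter. -/
def CatFilter.IsUltra {𝒞 : Type u} [Category.{v} 𝒞] (𝔘 : CatFilter 𝒞) : Prop :=
  ∀ 𝔊 : CatFilter 𝒞, (∀ X : 𝒞, 𝔘.F X ⊆ 𝔊.F X) → ∀ X : 𝒞, 𝔊.F X ⊆ 𝔘.F X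

/-!
For a sieve `A ∉ 𝔘(C)`, the sieves `R` on `C` with `A ∪ R ∈ 𝔘(C)` form a proper filter of sieves,
by distributivity of the lattice of sieves. Substituting it for `𝔘(C)` yields a filter on `𝒞` finer
than `𝔘`, so by maximality `A ∪ R ∈ 𝔘(C)` forces `R ∈ 𝔘(C)`.
-/

namespace CatFilter

variable {𝒞 : Type u} [Category.{v} 𝒞]

instance sieveDistribLattice (X : 𝒞) : DistribLattice (Sieve X) where
  le_sup_inf _ _ _ _ _ h := or_and_left.mpr h

/-- The colon filter of `𝔉` by a family `A` of sieves, none of them in `𝔉`: the sieves whose union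
with `A` belongs to `𝔉`. This is the order dual of the colon ideal `{r | a * r ∈ I}`. The family has
one sieve per object, with `⊥` at the objects where `𝔉` is to be left unchanged. -/
def colon (𝔉 : CatFilter 𝒞) (A : ∀ X : 𝒞, Sieve X) (hA : ∀ X, A X ∉ 𝔉.F X) : CatFilter 𝒞 where
  F X := {R | A X ⊔ R ∈ 𝔉.F X}
  mono hS hSR := 𝔉.mono hS (sup_le_sup_left hSR _)
  finInter {X} 𝒯 h𝒯 := by
    classical
    have sup_inf_eq : A X ⊔ 𝒯.inf id = (𝒯.image (A X ⊔ ·)).inf id := by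
      rw [Finset.inf_sup_distrib_left, Finset.inf_image, Function.id_comp]
      simp only [id_eq]
    change A X ⊔ 𝒯.inf id ∈ 𝔉.F X
    rw [sup_inf_eq]
    exact 𝔉.finInter _ (Finset.forall_mem_image.mpr h𝒯)
  bot_not_mem X hbot := hA X (𝔉.mono hbot (sup_bot_eq (A X)).le)

theorem subset_colon (𝔉 : CatFilter 𝒞) (A : ∀ X : 𝒞, Sieve X) (hA : ∀ X, A X ∉ 𝔉.F X) (X : 𝒞) :
    𝔉.F X ⊆ (𝔉.colon A hA).F X :=
  fun _ hR => 𝔉.mono hR le_sup_right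

theorem IsUltra.colon_subset {𝔘 : CatFilter 𝒞} (h𝔘 : 𝔘.IsUltra) (A : ∀ X : 𝒞, Sieve X)
    (hA : ∀ X, A X ∉ 𝔘.F X) (X : 𝒞) : (𝔘.colon A hA).F X ⊆ 𝔘.F X :=
  h𝔘 (𝔘.colon A hA) (𝔘.subset_colon A hA) X

end CatFilter

theorem ultrafilter_mem_of_union_mem_general
    {𝒞 : Type u} [Category.{v} 𝒞] (𝔘 : CatFilter 𝒞) (h𝔘 : 𝔘.IsUltra) (C : 𝒞) (S T : Sieve C)
    (h : S ⊔ T ∈ 𝔘.F C) : S ∈ 𝔘.F C ∨ T ∈ 𝔘.F C := by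
  classical
  refine or_iff_not_imp_left.mpr fun hS => ?_
  let A : ∀ X : 𝒞, Sieve X := Function.update (fun _ => ⊥) C S
  have hA : ∀ X, A X ∉ 𝔘.F X :=
    (Function.forall_update_iff _ fun X R => R ∉ 𝔘.F X).mpr ⟨hS, fun X _ => 𝔘.bot_not_mem X⟩
  have hAC : A C = S := Function.update_self C S _
  rw [← hAC] at h
  exact h𝔘.colon_subset A hA C h

/-- If the union of two sieves belongs to an ultrafilter, so does one of them. -/
theorem ultrafilter_mem_of_union_mem
    {𝒞 : Type u} [Category.{v} 𝒞] [Limits.HasFiniteLimits 𝒞]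
    (𝔘 : CatFilter 𝒞) (h𝔘 : 𝔘.IsUltra) (C : 𝒞) (S T : Sieve C)
    (h : S ⊔ T ∈ 𝔘.F C) : S ∈ 𝔘.F C ∨ T ∈ 𝔘.F C :=
  ultrafilter_mem_of_union_mem_general 𝔘 h𝔘 C S T h
end

section
/- Let 𝒞 be a finitely complete category, let 𝔘 be an ultrafilter on 𝒞, let C be an object of 𝒞, and let S₁, …, Sₙ be a finite sequence of sieves on C whose union S₁ ∪ ⋯ ∪ Sₙ belongs to 𝔘(C). Then at least one of the sieves Sᵢ belongs to 𝔘(C). -/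
open CategoryTheory Limits

universe w v u

/-!
An ultrafilter on a category is prime because sieves form a distributive lattice. If `A ∉ 𝔘(C)`,
then the sieves `T` on `C` with `A ∪ T ∈ 𝔘(C)` satisfy the filter axioms: distributivity gives
closure under intersections, and `A ∪ ∅ = A ∉ 𝔘(C)` excludes the empty sieve. No axiom relates
distinct objects, so enlarging `𝔘(C)` to this collection and leaving the other objects alone yields
a filter finer than `𝔘`; by maximality every such `T` lies in `𝔘(C)`. Hence the sieves outside
`𝔘(C)` are closed under finite unions.
-/

instance {𝒞 : Type u} [Category.{v} 𝒞] (X : 𝒞) : DistribLattice (Sieve X) where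
  le_sup_inf _ _ _ _ _ := or_and_left.mpr

namespace CatFilter

variable {𝒞 : Type u} [Category.{v} 𝒞]

/-- The preimage of the filter `𝔉` under `T ↦ A X ⊔ T`, used to enlarge an ultrafilter. The family
`A` has a sieve at every object; choosing `A X = ⊥` leaves `𝔉` unchanged at `X`. -/
def comapSup (𝔉 : CatFilter 𝒞) (A : ∀ X : 𝒞, Sieve X) (hA : ∀ X, A X ∉ 𝔉.F X) :
    CatFilter 𝒞 where
  F X := {T | A X ⊔ T ∈ 𝔉.F X}
  mono hS hSR := 𝔉.mono hS (sup_le_sup_left hSR _)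
  finInter {X} T hT := by
    classical
    have h_image : (T.image (A X ⊔ ·)).inf id ∈ 𝔉.F X :=
      𝔉.finInter _ (Finset.forall_mem_image.mpr hT)
    have h_distrib : A X ⊔ T.inf id = (T.image (A X ⊔ ·)).inf id := by
      simp only [Finset.inf_sup_distrib_left, Finset.inf_image, Function.id_comp, id]
    rwa [Set.mem_ofPred_eq, h_distrib]
  bot_not_mem X := by simpa only [Set.mem_ofPred_eq, sup_bot_eq] using hA X

theorem subset_comapSup (𝔉 : CatFilter 𝒞) (A : ∀ X : 𝒞, Sieve X) (hA : ∀ X, A X ∉ 𝔉.F X)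
    (X : 𝒞) : 𝔉.F X ⊆ (𝔉.comapSup A hA).F X :=
  fun _ hT => 𝔉.mono hT le_sup_right

theorem IsUltra.mem_of_sup_mem_of_notMem {𝔘 : CatFilter 𝒞} (h𝔘 : 𝔘.IsUltra) {C : 𝒞}
    {A B : Sieve C} (hAB : A ⊔ B ∈ 𝔘.F C) (hA : A ∉ 𝔘.F C) : B ∈ 𝔘.F C := by
  classical
  let A' : ∀ X : 𝒞, Sieve X := Function.update (fun _ => ⊥) C A
  have hA' : ∀ X, A' X ∉ 𝔘.F X :=
    (Function.forall_update_iff _ fun X S => S ∉ 𝔘.F X).mpr ⟨hA, fun X _ => 𝔘.bot_not_mem X⟩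
  have hB : A' C ⊔ B ∈ 𝔘.F C := by rwa [show A' C = A from Function.update_self ..]
  exact h𝔘 (𝔘.comapSup A' hA') (𝔘.subset_comapSup A' hA') C hB

end CatFilter

theorem ultrafilter_mem_of_finite_union_mem_general
    {𝒞 : Type u} [Category.{v} 𝒞] {𝔘 : CatFilter 𝒞} (h𝔘 : 𝔘.IsUltra) {C : 𝒞}
    {ι : Type*} {s : Finset ι} {S : ι → Sieve C} (h : s.sup S ∈ 𝔘.F C) :
    ∃ i ∈ s, S i ∈ 𝔘.F C := by
  by_contra! hS
  have sup_notMem : ∀ A ∉ 𝔘.F C, ∀ B ∉ 𝔘.F C, A ⊔ B ∉ 𝔘.F C :=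
    fun A hA B hB hAB => hB (h𝔘.mem_of_sup_mem_of_notMem hAB hA)
  exact Finset.sup_mem (𝔘.F C)ᶜ (𝔘.bot_not_mem C) sup_notMem s S hS h

/-- If the union of a finite sequence of sieves belongs to an ultrafilter,
then at least one of them does. -/
theorem ultrafilter_mem_of_finite_union_mem
    {𝒞 : Type u} [Category.{v} 𝒞] [Limits.HasFiniteLimits 𝒞]
    (𝔘 : CatFilter 𝒞) (h𝔘 : 𝔘.IsUltra) (C : 𝒞) (n : ℕ) (S : Fin n → Sieve C)
    (h : (Finset.univ.sup S) ∈ 𝔘.F C) : ∃ i : Fin n, S i ∈ 𝔘.F C := by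
  obtain ⟨i, -, hi⟩ := ultrafilter_mem_of_finite_union_mem_general h𝔘 h
  exact ⟨i, hi⟩
end

section
/- Let (𝒞, J) be a finitely complete category endowed with a Grothendieck topology, let C be an object of 𝒞, and let p : 1 → C be a point of C. Assume that for any two 𝔊-neighborhoods V and W of p there exists a 𝔊-neighborhood U of p with U ⊆ V ∩ W. Then the collection 𝒩_p(C) of all cover-neighborhoods of p satisfies: (F1) if S ∈ 𝒩_p(C) and R is a sieve on C with S ⊆ R, then R ∈ 𝒩_p(C); (F2) every finite intersection of sieves of 𝒩_p(C) belongs to 𝒩_p(C); (F3) the empty sieve is not in 𝒩_p(C); that is, (C, 𝒩_p(C)) is a filtered object. -/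
open CategoryTheory Limits

universe w v u

/-- A 𝔊-neighborhood of a point `p : 1 ⟶ X` with respect to a Grothendieck topology `J`:
a covering sieve containing a morphism through which `p` factors. -/
def IsGNbhd {𝒞 : Type u} [Category.{v} 𝒞] [Limits.HasFiniteLimits 𝒞]
    (J : GrothendieckTopology 𝒞) {X : 𝒞} (p : ⊤_ 𝒞 ⟶ X) (V : Sieve X) : Prop :=
  V ∈ J X ∧ ∃ (D : 𝒞) (φ : D ⟶ X), V.arrows φ ∧ ∃ q : ⊤_ 𝒞 ⟶ D, q ≫ φ = p

/-- A cover-neighborhood of a point `p`: a sieve containing some 𝔊-neighborhood of `p`. -/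
def IsCoverNbhd {𝒞 : Type u} [Category.{v} 𝒞] [Limits.HasFiniteLimits 𝒞]
    (J : GrothendieckTopology 𝒞) {X : 𝒞} (p : ⊤_ 𝒞 ⟶ X) (S : Sieve X) : Prop :=
  ∃ V : Sieve X, IsGNbhd J p V ∧ V ≤ S

/-- Two sieves on the same object meet if some morphism belongs to both. -/
def Meets {𝒞 : Type u} [Category.{v} 𝒞] {X : 𝒞} (S T : Sieve X) : Prop :=
  ∃ (D : 𝒞) (f : D ⟶ X), S.arrows f ∧ T.arrows f

/-!
A sieve containing some `φ` with `q ≫ φ = p` contains `p` itself, so the 𝔊-neighborhoods of `p` are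
exactly the covering sieves that contain `p`. These are closed under enlargement and under binary
intersection, since covering sieves are, so every cover-neighborhood is already a 𝔊-neighborhood.
-/

section

variable {𝒞 : Type u} [Category.{v} 𝒞] [HasFiniteLimits 𝒞]
  {J : GrothendieckTopology 𝒞} {X : 𝒞} {p : ⊤_ 𝒞 ⟶ X} {V W : Sieve X}

theorem isGNbhd_iff : IsGNbhd J p V ↔ V ∈ J X ∧ V p := by
  refine and_congr_right fun _ => ⟨?_, fun hp => ⟨⊤_ 𝒞, p, hp, 𝟙 _, Category.id_comp p⟩⟩
  rintro ⟨D, φ, hφ, q, rfl⟩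
  exact V.downward_closed hφ q

theorem IsGNbhd.mono (hV : IsGNbhd J p V) (hVW : V ≤ W) : IsGNbhd J p W := by
  obtain ⟨hVJ, hVp⟩ := isGNbhd_iff.mp hV
  exact isGNbhd_iff.mpr ⟨J.superset_covering hVW hVJ, hVW p hVp⟩

theorem isCoverNbhd_iff_isGNbhd : IsCoverNbhd J p V ↔ IsGNbhd J p V :=
  ⟨fun ⟨_, hU, hUV⟩ => hU.mono hUV, fun hV => ⟨V, hV, le_rfl⟩⟩

theorem isGNbhd_top : IsGNbhd J p ⊤ :=
  isGNbhd_iff.mpr ⟨J.top_mem X, trivial⟩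

theorem IsGNbhd.inf (hV : IsGNbhd J p V) (hW : IsGNbhd J p W) : IsGNbhd J p (V ⊓ W) := by
  obtain ⟨hVJ, hVp⟩ := isGNbhd_iff.mp hV
  obtain ⟨hWJ, hWp⟩ := isGNbhd_iff.mp hW
  exact isGNbhd_iff.mpr ⟨J.intersection_covering hVJ hWJ, hVp, hWp⟩

theorem isGNbhd_finset_inf {ι : Type*} {s : Finset ι} {f : ι → Sieve X}
    (hf : ∀ i ∈ s, IsGNbhd J p (f i)) : IsGNbhd J p (s.inf f) :=
  Finset.inf_induction isGNbhd_top (fun _ hV _ hW => hV.inf hW) hf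

theorem not_isGNbhd_bot : ¬ IsGNbhd J p ⊥ :=
  fun h => (isGNbhd_iff.mp h).2

end

theorem coverNbhds_filter_axioms_general
    {𝒞 : Type u} [Category.{v} 𝒞] [HasFiniteLimits 𝒞]
    (J : GrothendieckTopology 𝒞) (C : 𝒞) (p : ⊤_ 𝒞 ⟶ C) :
    (∀ S ∈ {S : Sieve C | IsCoverNbhd J p S}, ∀ R : Sieve C, S ≤ R →
        R ∈ {S : Sieve C | IsCoverNbhd J p S}) ∧
    (∀ T : Finset (Sieve C), (∀ S ∈ T, S ∈ {S : Sieve C | IsCoverNbhd J p S}) →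
        T.inf id ∈ {S : Sieve C | IsCoverNbhd J p S}) ∧
    (⊥ ∉ {S : Sieve C | IsCoverNbhd J p S}) := by
  simp only [Set.mem_ofPred_eq, isCoverNbhd_iff_isGNbhd]
  exact ⟨fun _ hS _ hSR => hS.mono hSR, fun _ hT => isGNbhd_finset_inf hT, not_isGNbhd_bot⟩

/-- The collection of all cover-neighborhoods of a point satisfies the filter axioms,
provided the 𝔊-neighborhoods of the point are downward directed. -/
theorem coverNbhds_filter_axioms
    {𝒞 : Type u} [Category.{v} 𝒞] [Limits.HasFiniteLimits 𝒞]
    (J : GrothendieckTopology 𝒞) (C : 𝒞) (p : ⊤_ 𝒞 ⟶ C)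
    (hdir : ∀ V W : Sieve C, IsGNbhd J p V → IsGNbhd J p W →
      ∃ U : Sieve C, IsGNbhd J p U ∧ U ≤ V ⊓ W) :
    (∀ S ∈ {S : Sieve C | IsCoverNbhd J p S}, ∀ R : Sieve C, S ≤ R →
        R ∈ {S : Sieve C | IsCoverNbhd J p S}) ∧
    (∀ T : Finset (Sieve C), (∀ S ∈ T, S ∈ {S : Sieve C | IsCoverNbhd J p S}) →
        T.inf id ∈ {S : Sieve C | IsCoverNbhd J p S}) ∧
    (⊥ ∉ {S : Sieve C | IsCoverNbhd J p S}) := by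
  exact coverNbhds_filter_axioms_general J C p
end

section
/- Let (𝒞, J) be a finitely complete category endowed with a Grothendieck topology, let 𝔉 be a filter on 𝒞, let C be an object of 𝒞, and let p : 1 → C be a point of C. Assume that for any two 𝔊-neighborhoods V and W of p there exists a 𝔊-neighborhood U of p with U ⊆ V ∩ W. Then p is a cluster point of 𝔉(C) if and only if there exists a filter 𝔊 on 𝒞 finer than 𝔉 such that 𝔊(C) converges to p. -/
open CategoryTheory Limits

universe w v u

/-!
The cover-neighborhoods of a point `p` are exactly the covering sieves that contain `p` itself, so
they form a filter `𝒩` of the lattice of sieves on `C`. Two filters of a meet-semilattice have a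
common proper extension if and only if their members have pairwise nonzero meets; for `𝔉(C)` and
`𝒩` this is the cluster condition. Since the axioms of a filter on `𝒞` do not relate different
objects, a proper extension of `𝔉(C)` alone, with `𝔉` kept at all other objects, is a filter on `𝒞`.
-/

theorem exists_proper_pfilter_ge_iff {P : Type*} [SemilatticeInf P] [OrderBot P]
    [IsDirectedOrder P] (F G : Order.PFilter P) :
    (∃ H : Order.PFilter P, F ≤ H ∧ G ≤ H ∧ ⊥ ∉ H) ↔ ∀ a ∈ F, ∀ b ∈ G, a ⊓ b ≠ ⊥ := by
  constructor
  · rintro ⟨H, hF, hG, hH⟩ a ha b hb hab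
    exact hH (hab ▸ Order.PFilter.inf_mem (hF ha) (hG hb))
  · intro h
    refine ⟨⟨F.dual ⊔ G.dual⟩, le_sup_left (a := F.dual), le_sup_right (a := F.dual), ?_⟩
    rintro ⟨a, ha, b, hb, hab⟩
    exact h a ha b hb (le_bot_iff.mp hab)

section

variable {𝒞 : Type u} [Category.{v} 𝒞]

theorem meets_iff_inf_ne_bot {X : 𝒞} {S T : Sieve X} : Meets S T ↔ S ⊓ T ≠ ⊥ := by
  constructor
  · rintro ⟨D, f, hS, hT⟩ h
    exact h.le f ⟨hS, hT⟩
  · contrapose!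
    intro h
    exact le_bot_iff.mp fun D f hf ↦ h ⟨D, f, hf⟩

namespace CatFilter

theorem inf_mem (𝔉 : CatFilter 𝒞) {X : 𝒞} {S T : Sieve X} (hS : S ∈ 𝔉.F X) (hT : T ∈ 𝔉.F X) :
    S ⊓ T ∈ 𝔉.F X := by
  classical
  simpa using 𝔉.finInter {S, T} (by simp [hS, hT])

/-- The collection `𝔉(X)` as an order-theoretic filter of the lattice of sieves on `X`. -/
def toPFilter (𝔉 : CatFilter 𝒞) (X : 𝒞) : Order.PFilter (Sieve X) :=
  Order.IsPFilter.toPFilter (F := 𝔉.F X) <| .of_def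
    ⟨⊤, 𝔉.finInter ∅ (by simp)⟩
    (fun S hS T hT ↦ ⟨S ⊓ T, 𝔉.inf_mem hS hT, inf_le_left, inf_le_right⟩)
    (fun hle hS ↦ 𝔉.mono hS hle)

/-- The filter on `𝒞` assembled from an arbitrary choice of a proper order-theoretic filter of
sieves on each object. -/
def ofPFilters (𝒢 : ∀ X : 𝒞, Order.PFilter (Sieve X)) (h : ∀ X, ⊥ ∉ 𝒢 X) : CatFilter 𝒞 where
  F X := 𝒢 X
  mono hS hle := Order.PFilter.mem_of_le hle hS
  finInter _ hT :=
    Finset.inf_induction Order.PFilter.top_mem (fun _ hS _ hR ↦ Order.PFilter.inf_mem hS hR) hT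
  bot_not_mem := h

theorem exists_finer_eq_at (𝔉 : CatFilter 𝒞) {C : 𝒞} (𝒢 : Order.PFilter (Sieve C))
    (hle : 𝔉.toPFilter C ≤ 𝒢) (hbot : ⊥ ∉ 𝒢) :
    ∃ 𝔊 : CatFilter 𝒞, (∀ X, 𝔉.F X ⊆ 𝔊.F X) ∧ 𝔊.F C = 𝒢 := by
  classical
  let ℋ := Function.update 𝔉.toPFilter C 𝒢
  have proper : ∀ X, ⊥ ∉ ℋ X :=
    (Function.forall_update_iff _ fun X (ℱ : Order.PFilter (Sieve X)) ↦ ⊥ ∉ ℱ).mpr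
      ⟨hbot, fun X _ ↦ 𝔉.bot_not_mem X⟩
  have finer : 𝔉.toPFilter ≤ ℋ := le_update_iff.mpr ⟨hle, fun _ _ ↦ le_rfl⟩
  exact ⟨ofPFilters ℋ proper, finer, congrArg SetLike.coe (Function.update_self C 𝒢 𝔉.toPFilter)⟩

end CatFilter

theorem cluster_point_iff_exists_finer_convergent_general (𝔉 : CatFilter 𝒞) {C : 𝒞}
    (𝒩 : Order.PFilter (Sieve C)) :
    (∀ A ∈ 𝔉.F C, ∀ S ∈ 𝒩, Meets S A) ↔
      ∃ 𝔊 : CatFilter 𝒞, (∀ X : 𝒞, 𝔉.F X ⊆ 𝔊.F X) ∧ ∀ S ∈ 𝒩, S ∈ 𝔊.F C := by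
  calc (∀ A ∈ 𝔉.F C, ∀ S ∈ 𝒩, Meets S A)
    _ ↔ ∀ A ∈ 𝔉.toPFilter C, ∀ S ∈ 𝒩, A ⊓ S ≠ ⊥ := by
      simp only [meets_iff_inf_ne_bot, inf_comm]
      rfl
    _ ↔ ∃ 𝒢 : Order.PFilter (Sieve C), 𝔉.toPFilter C ≤ 𝒢 ∧ 𝒩 ≤ 𝒢 ∧ ⊥ ∉ 𝒢 :=
      (exists_proper_pfilter_ge_iff _ _).symm
    _ ↔ ∃ 𝔊 : CatFilter 𝒞, (∀ X : 𝒞, 𝔉.F X ⊆ 𝔊.F X) ∧ ∀ S ∈ 𝒩, S ∈ 𝔊.F C := by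
      constructor
      · rintro ⟨𝒢, h𝔉, h𝒩, hbot⟩
        obtain ⟨𝔊, finer, hC⟩ := 𝔉.exists_finer_eq_at 𝒢 h𝔉 hbot
        exact ⟨𝔊, finer, fun S hS ↦ hC.ge (h𝒩 hS)⟩
      · rintro ⟨𝔊, finer, conv⟩
        exact ⟨𝔊.toPFilter C, finer C, conv, 𝔊.bot_not_mem C⟩

variable [HasFiniteLimits 𝒞] {J : GrothendieckTopology 𝒞} {X : 𝒞} {p : ⊤_ 𝒞 ⟶ X}

theorem isCoverNbhd_iff {S : Sieve X} : IsCoverNbhd J p S ↔ S ∈ J X ∧ S.arrows p := by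
  constructor
  · rintro ⟨V, ⟨hVJ, D, φ, hφ, q, rfl⟩, hVS⟩
    exact ⟨J.superset_covering hVS hVJ, hVS _ (V.downward_closed hφ q)⟩
  · rintro ⟨hSJ, hp⟩
    exact ⟨S, ⟨hSJ, _, p, hp, 𝟙 _, Category.id_comp p⟩, le_rfl⟩

theorem IsCoverNbhd.inf {S T : Sieve X} (hS : IsCoverNbhd J p S) (hT : IsCoverNbhd J p T) :
    IsCoverNbhd J p (S ⊓ T) := by
  obtain ⟨hSJ, hSp⟩ := isCoverNbhd_iff.mp hS
  obtain ⟨hTJ, hTp⟩ := isCoverNbhd_iff.mp hT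
  exact isCoverNbhd_iff.mpr ⟨J.intersection_covering hSJ hTJ, hSp, hTp⟩

variable (J p) in
/-- The collection `𝒩_p(X)` of all cover-neighborhoods of the point `p`, as an order-theoretic
filter of the lattice of sieves on `X`. -/
def coverNbhds : Order.PFilter (Sieve X) :=
  Order.IsPFilter.toPFilter (F := {S | IsCoverNbhd J p S}) <| .of_def
    ⟨⊤, isCoverNbhd_iff.mpr ⟨J.top_mem X, trivial⟩⟩
    (fun S hS T hT ↦ ⟨S ⊓ T, IsCoverNbhd.inf hS hT, inf_le_left, inf_le_right⟩)
    (fun hle ⟨V, hV, hVS⟩ ↦ ⟨V, hV, hVS.trans hle⟩)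

end

/-- A point is a cluster point of 𝔉(C) iff some filter finer than 𝔉 converges to it,
assuming the 𝔊-neighborhoods of the point are downward directed. -/
theorem cluster_point_iff_exists_finer_convergent
    {𝒞 : Type u} [Category.{v} 𝒞] [Limits.HasFiniteLimits 𝒞]
    (J : GrothendieckTopology 𝒞) (𝔉 : CatFilter 𝒞) (C : 𝒞) (p : ⊤_ 𝒞 ⟶ C)
    (hdir : ∀ V W : Sieve C, IsGNbhd J p V → IsGNbhd J p W →
      ∃ U : Sieve C, IsGNbhd J p U ∧ U ≤ V ⊓ W) :
    (∀ A ∈ 𝔉.F C, ∀ S : Sieve C, IsCoverNbhd J p S → Meets S A) ↔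
    ∃ 𝔊 : CatFilter 𝒞, (∀ X : 𝒞, 𝔉.F X ⊆ 𝔊.F X) ∧
      (∀ S : Sieve C, IsCoverNbhd J p S → S ∈ 𝔊.F C) :=
  cluster_point_iff_exists_finer_convergent_general 𝔉 (coverNbhds J p)
end
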